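/- arXiv:2312.17006 — 5 statements merged into one kernel-verified Lean document; each statement's English description precedes it below -/
import Mathlib

section
/- Let a, b, c, d be nonnegative real numbers and let σ̄, ψ be real numbers with 0 < σ̄ < 1 and 0 < ψ < 1. Define σ := 1 - (1-ψ)(1-σ̄). Then σ̄·a + b + c + d ≤ max{ σ·a , 3b/((1-σ̄)·ψ) , 3c/((1-σ̄)·ψ) , 3d/((1-σ̄)·ψ) }. -/
/-- Four-term scalar inequality underlying Lemma 1: a sum-form simulation-function
estimate with contraction factor `σ̄` implies a max-form estimate where each
perturbation term is rescaled by `3/((1-σ̄)ψ)`. -/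
theorem stmt1 (a b c d σb ψ σ : ℝ)
    (ha : 0 ≤ a) (hb : 0 ≤ b) (hc : 0 ≤ c) (hd : 0 ≤ d)
    (hσb : 0 < σb ∧ σb < 1) (hψ : 0 < ψ ∧ ψ < 1)
    (hσ : σ = 1 - (1 - ψ) * (1 - σb)) :
    σb * a + b + c + d ≤
      max (σ * a)
        (max (3 * b / ((1 - σb) * ψ)) (max (3 * c / ((1 - σb) * ψ)) (3 * d / ((1 - σb) * ψ)))) := by
  obtain ⟨hσb0, hσb1⟩ := hσb
  obtain ⟨hψ0, hψ1⟩ := hψ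
  have hk : 0 < (1 - σb) * ψ := mul_pos (sub_pos.2 hσb1) hψ0
  have hσk : σ = σb + (1 - σb) * ψ := by rw [hσ]; ring
  have hσ1 : σb + (1 - σb) * ψ ≤ 1 := by nlinarith
  rw [hσk]
  generalize (1 - σb) * ψ = k at *
  set M := max ((σb + k) * a) (max (3 * b / k) (max (3 * c / k) (3 * d / k))) with hM
  have hMa : (σb + k) * a ≤ M := by simp [hM]
  have hMb : 3 * b ≤ M * k := (div_le_iff₀ hk).1 (by simp [hM])
  have hMc : 3 * c ≤ M * k := (div_le_iff₀ hk).1 (by simp [hM])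
  have hMd : 3 * d ≤ M * k := (div_le_iff₀ hk).1 (by simp [hM])
  rcases le_total (b + c + d) (k * a) with h | h
  · linarith
  · have haM : a ≤ M := le_of_mul_le_mul_left (by linarith) hk
    have hM0 : 0 ≤ M := ha.trans haM
    calc σb * a + b + c + d ≤ σb * M + M * k := by
          linarith [mul_le_mul_of_nonneg_left haM hσb0.le]
      _ = (σb + k) * M := by ring
      _ ≤ M := mul_le_of_le_one_left hM0 hσ1
end

section
/- Let N ≥ 1 and σ̃ ∈ (0,1). For each i ∈ {1,…,N}, let ψ_i : ℝ≥0 → ℝ≥0 be a class-K∞ function with inverse ψ_i⁻¹, and for each pair (i,j) let γ_{ij} : ℝ≥0 → ℝ≥0 be a nondecreasing function satisfying the scaled small-gain condition γ_{ij}(ψ_j(r)) ≤ ψ_i(σ̃·r) for all r ≥ 0. Let s_i ≥ 0, s_i⁺ ≥ 0 and c_i ≥ 0 be real numbers such that for every i, s_i⁺ ≤ max{ max_{1≤j≤N} γ_{ij}(s_j) , c_i }. Then max_{1≤i≤N} ψ_i⁻¹(s_i⁺) ≤ max{ σ̃ · max_{1≤i≤N} ψ_i⁻¹(s_i) , max_{1≤i≤N}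 ψ_i⁻¹(c_i) }. -/
open Filter NNReal

/-- Core decay step of Theorem 1: under the scaled small-gain condition
`γ_{ij}(ψ_j(r)) ≤ ψ_i(σ̃·r)`, a max-form local estimate on each `s_i⁺` implies a
max-form contraction for `max_i ψ_i⁻¹(s_i⁺)`. -/
theorem stmt7 (N : ℕ) (hN : 1 ≤ N) (σt : ℝ≥0) (hσt : 0 < σt ∧ σt < 1)
    (ψ ψinv : Fin N → ℝ≥0 → ℝ≥0)
    (hψ_cont : ∀ i, Continuous (ψ i)) (hψ_mono : ∀ i, StrictMono (ψ i))
    (hψ_zero : ∀ i, ψ i 0 = 0) (hψ_top : ∀ i, Tendsto (ψ i) atTop atTop)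
    (hψinv_left : ∀ i, Function.LeftInverse (ψinv i) (ψ i))
    (hψinv_right : ∀ i, Function.RightInverse (ψinv i) (ψ i))
    (γ : Fin N → Fin N → ℝ≥0 → ℝ≥0)
    (hγ_mono : ∀ i j, Monotone (γ i j))
    (hsg : ∀ i j r, γ i j (ψ j r) ≤ ψ i (σt * r))
    (s sp c : Fin N → ℝ≥0)
    (hstep : ∀ i, sp i ≤ max (⨆ j, γ i j (s j)) (c i)) :
    (⨆ i, ψinv i (sp i)) ≤ max (σt * ⨆ i, ψinv i (s i)) (⨆ i, ψinv i (c i)) := by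
  have : Nonempty (Fin N) := ⟨⟨0, hN⟩⟩
  refine ciSup_le fun i => ?_
  rw [← (hψ_mono i).le_iff_le, hψinv_right i (sp i)]
  refine (hstep i).trans (max_le (ciSup_le fun j => ?_) ?_)
  · calc γ i j (s j) = γ i j (ψ j (ψinv j (s j))) := by rw [hψinv_right j (s j)]
      _ ≤ ψ i (σt * ψinv j (s j)) := hsg i j _
      _ ≤ _ := (hψ_mono i).monotone <| le_max_of_le_left <|
        mul_le_mul_right (le_ciSup (f := fun k => ψinv k (s k)) (Set.finite_range _).bddAbove j) σt
  · calc c i = ψ i (ψinv i (c i)) := (hψinv_right i (c i)).symm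
      _ ≤ _ := (hψ_mono i).monotone <| le_max_of_le_right <|
        le_ciSup (f := fun k => ψinv k (c k)) (Set.finite_range _).bddAbove i
end

section
/- Let N ≥ 1. For each i ∈ {1,…,N} let X_i, X̂_i, W_i, Ŵ_i, U_i, Û_i be types; let F_i : X_i × W_i × U_i → Set X_i and F̂_i : X̂_i × Ŵ_i × Û_i → Set X̂_i be set-valued transition maps; for each pair (i,j) let H_{ij} : X_i → ℝ^{p_{ij}} and Ĥ_{ij} : X̂_i → ℝ^{p_{ij}} be output maps into ℝ^{p_{ij}} with the sup norm. The internal input of subsystem i is the tuple ω_i = (ω_{ij})_{j≠i} with ω_{ij} ∈ ℝ^{p_{ji}}, with norm ‖ω_i‖ = max_{j≠i} ‖ω_{ij}‖; interconnection is exact: in the interconnected system T, from state x = (x_1,…,x_N) each subsystem receives ω_{ij} = H_{ji}(x_j), and in T̂, from x̂ = (x̂_1,…,x̂_N), ω̂_{ij} = Ĥ_{ji}(x̂_j). Suppose: (a) for each i there are a class-K∞ function α_i, a constant σ_i ∈ (0,1), a nondecreasing function ρ_{ω_i} ≥ 0 with ρ_{ω_i}(0)=0, a nondecreasing function ρ_{u_i}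 ≥ 0, a constant ε_i ≥ 0, and a nonnegative function S_i : X_i × X̂_i → ℝ such that α_i( max_j ‖H_{ij}(x_i) − Ĥ_{ij}(x̂_i)‖ ) ≤ S_i(x_i, x̂_i) for all x_i, x̂_i, and for all x_i, x̂_i and all û_i ∈ Û_i there exists u_i ∈ U_i such that for all internal inputs ω_i, ω̂_i and every x_i⁺ ∈ F_i(x_i, ω_i, u_i) there exists x̂_i⁺ ∈ F̂_i(x̂_i, ω̂_i, û_i) with S_i(x_i⁺, x̂_i⁺) ≤ max{ σ_i·S_i(x_i,x̂_i) , ρ_{ω_i}(‖ω_i − ω̂_i‖) , ρ_{u_i}(‖û_i‖) , ε_i }; (b) defining γ_{ii}(r) := σ_i·r and γ_{ij} := ρ_{ω_i}∘α_j⁻¹ for i ≠ j, there exist class-K∞ functions ψ_i and a constant σ̃ ∈ (0,1) such that ψ_i⁻¹(γ_{ij}(ψ_j(r))) ≤ σ̃·r for all i, j and all r ≥ 0. Then the function S̃(x, x̂) := max_{1≤i≤N} ψ_i⁻¹( S_i(x_i, x̂_i) ) is an alternating simulation function from the interconnection T̂ = I(T̂_1,…,T̂_N) to T = I(T_1,…,T_N):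 (1) α̃( max_i ‖H_{ii}(x_i) − Ĥ_{ii}(x̂_i)‖ ) ≤ S̃(x, x̂) for all x, x̂, where α̃(r) := min_j ψ_j⁻¹(α_j(r)); and (2) for all x, x̂ and all û = (û_1,…,û_N) there exists u = (u_1,…,u_N) such that for every x⁺ with x_i⁺ ∈ F_i(x_i, (H_{ji}(x_j))_{j≠i}, u_i) for all i, there exists x̂⁺ with x̂_i⁺ ∈ F̂_i(x̂_i, (Ĥ_{ji}(x̂_j))_{j≠i}, û_i) for all i, satisfying S̃(x⁺, x̂⁺) ≤ max{ σ̃·S̃(x, x̂) , max_i ψ_i⁻¹(ρ_{u_i}(‖û_i‖)) , max_i ψ_i⁻¹(ε_i) }. -/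
open Filter NNReal

/-- The inverse of a strictly monotone map between linear orders is monotone. -/
theorem monotone_of_strictMono_rightInverse {β δ : Type*} [LinearOrder β] [Preorder δ]
    {f : β → δ} {g : δ → β} (hf : StrictMono f) (h : Function.RightInverse g f) :
    Monotone g := fun a b hab => by
  rwa [← hf.le_iff_le, h a, h b]

/-- The norm of a finite tuple vanishes or is attained at some component. -/
theorem pi_nnnorm_eq_zero_or_exists {ι : Type*} [Fintype ι] {E : ι → Type*}
    [∀ i, SeminormedAddCommGroup (E i)] (v : ∀ i, E i) :
    ‖v‖₊ = 0 ∨ ∃ i, ‖v‖₊ = ‖v i‖₊ := by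
  rcases isEmpty_or_nonempty ι with _ | _
  · left
    simp [Pi.nnnorm_def]
  · right
    obtain ⟨i, -, hi⟩ :=
      Finset.exists_mem_eq_sup Finset.univ Finset.univ_nonempty fun i => ‖v i‖₊
    exact ⟨i, (Pi.nnnorm_def v).trans hi⟩

theorem le_ciSup_of_finite {ι β : Type*} [Finite ι] [ConditionallyCompleteLattice β]
    (f : ι → β) (i : ι) : f i ≤ ⨆ j, f j :=
  le_ciSup (Set.finite_range f).bddAbove i

/-- Theorem 1 of the paper: compositional construction of an alternating simulation
function.  Subsystem `i` has state types `X i`, `Xh i`, external-input types `U i`,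
`Uh i` (with a norm), and output maps `H i j : X i → ℝ^{p i j}` (sup norm); its
internal input is the tuple `(ω_{ij})_{j ≠ i}` with `ω_{ij} ∈ ℝ^{p j i}`, with the
sup norm over components.  Under the local max-form alternating simulation estimates
(hS1), (hS2) and the scaled small-gain condition (hsg), the function
`S̃(x,x̂) = max_i ψ_i⁻¹(S_i(x_i,x̂_i))` satisfies both conditions of an alternating
simulation function from the interconnection of the abstractions to the
interconnection of the concrete subsystems. -/
theorem stmt8
    (N : ℕ) (hN : 1 ≤ N)
    (p : Fin N → Fin N → ℕ)
    (X Xh U Uh : Fin N → Type*)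
    [∀ i, NNNorm (Uh i)]
    (H : (i : Fin N) → (j : Fin N) → X i → (Fin (p i j) → ℝ))
    (Hh : (i : Fin N) → (j : Fin N) → Xh i → (Fin (p i j) → ℝ))
    (F : (i : Fin N) → X i → ((j : {j : Fin N // j ≠ i}) → (Fin (p j.1 i) → ℝ)) →
      U i → Set (X i))
    (Fh : (i : Fin N) → Xh i → ((j : {j : Fin N // j ≠ i}) → (Fin (p j.1 i) → ℝ)) →
      Uh i → Set (Xh i))
    (S : (i : Fin N) → X i → Xh i → ℝ≥0)
    (α αinv : Fin N → ℝ≥0 → ℝ≥0)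
    (σ : Fin N → ℝ≥0) (ρω ρu : Fin N → ℝ≥0 → ℝ≥0) (ε : Fin N → ℝ≥0)
    (ψ ψinv : Fin N → ℝ≥0 → ℝ≥0) (σt : ℝ≥0)
    -- `α i` is class K∞ with inverse `αinv i`
    (hα_cont : ∀ i, Continuous (α i)) (hα_mono : ∀ i, StrictMono (α i))
    (hα_zero : ∀ i, α i 0 = 0) (hα_top : ∀ i, Tendsto (α i) atTop atTop)
    (hαinv_left : ∀ i, Function.LeftInverse (αinv i) (α i))
    (hαinv_right : ∀ i, Function.RightInverse (αinv i) (α i))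
    -- `ψ i` is class K∞ with inverse `ψinv i`
    (hψ_cont : ∀ i, Continuous (ψ i)) (hψ_mono : ∀ i, StrictMono (ψ i))
    (hψ_zero : ∀ i, ψ i 0 = 0) (hψ_top : ∀ i, Tendsto (ψ i) atTop atTop)
    (hψinv_left : ∀ i, Function.LeftInverse (ψinv i) (ψ i))
    (hψinv_right : ∀ i, Function.RightInverse (ψinv i) (ψ i))
    -- constants and gain functions
    (hσ : ∀ i, 0 < σ i ∧ σ i < 1)
    (hρω_mono : ∀ i, Monotone (ρω i)) (hρω_zero : ∀ i, ρω i 0 = 0)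
    (hρu_mono : ∀ i, Monotone (ρu i))
    -- (a) local alternating simulation function, condition (1)
    (hS1 : ∀ (i : Fin N) (x : X i) (xh : Xh i),
      α i (⨆ j, ‖H i j x - Hh i j xh‖₊) ≤ S i x xh)
    -- (a) local alternating simulation function, condition (2), max form
    (hS2 : ∀ (i : Fin N) (x : X i) (xh : Xh i) (uh : Uh i), ∃ u : U i,
      ∀ (ω ωh : (j : {j : Fin N // j ≠ i}) → (Fin (p j.1 i) → ℝ)),
        ∀ x' ∈ F i x ω u, ∃ xh' ∈ Fh i xh ωh uh,
          S i x' xh' ≤ max (max (σ i * S i x xh) (ρω i ‖ω - ωh‖₊))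
            (max (ρu i ‖uh‖₊) (ε i)))
    -- (b) scaled small-gain condition with γ_{ii} = σ_i·id and γ_{ij} = ρ_{ω_i} ∘ α_j⁻¹
    (hσt : 0 < σt ∧ σt < 1)
    (hsg : ∀ (i j : Fin N) (r : ℝ≥0),
      ψinv i (if i = j then σ i * ψ j r else ρω i (αinv j (ψ j r))) ≤ σt * r) :
    -- condition (1) of the composed alternating simulation function
    (∀ (x : ∀ i, X i) (xh : ∀ i, Xh i),
      (⨅ j, ψinv j (α j (⨆ i, ‖H i i (x i) - Hh i i (xh i)‖₊)))
        ≤ ⨆ i, ψinv i (S i (x i) (xh i)))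
    ∧
    -- condition (2) of the composed alternating simulation function, with exact
    -- interconnection ω_{ij} = H_{ji}(x_j) and ω̂_{ij} = Ĥ_{ji}(x̂_j)
    (∀ (x : ∀ i, X i) (xh : ∀ i, Xh i) (uh : ∀ i, Uh i), ∃ u : ∀ i, U i,
      ∀ x' : ∀ i, X i,
        (∀ i, x' i ∈ F i (x i) (fun j => H j.1 i (x j.1)) (u i)) →
        ∃ xh' : ∀ i, Xh i,
          (∀ i, xh' i ∈ Fh i (xh i) (fun j => Hh j.1 i (xh j.1)) (uh i)) ∧
          (⨆ i, ψinv i (S i (x' i) (xh' i)))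
            ≤ max (σt * ⨆ i, ψinv i (S i (x i) (xh i)))
                (max (⨆ i, ψinv i (ρu i ‖uh i‖₊)) (⨆ i, ψinv i (ε i)))) := by
  have : Nonempty (Fin N) := ⟨⟨0, hN⟩⟩
  have hψinv_mono i : Monotone (ψinv i) :=
    monotone_of_strictMono_rightInverse (hψ_mono i) (hψinv_right i)
  have hαinv_mono i : Monotone (αinv i) :=
    monotone_of_strictMono_rightInverse (hα_mono i) (hαinv_right i)
  have hψinv_zero i : ψinv i 0 = 0 := by simpa [hψ_zero] using hψinv_left i 0
  refine ⟨fun x xh => ?_, fun x xh uh => ?_⟩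
  · obtain ⟨i, hi⟩ := exists_eq_ciSup_of_finite (f := fun i => ‖H i i (x i) - Hh i i (xh i)‖₊)
    rw [← hi]
    calc _ ≤ ψinv i (α i ‖H i i (x i) - Hh i i (xh i)‖₊) := ciInf_le (OrderBot.bddBelow _) i
      _ ≤ ψinv i (S i (x i) (xh i)) := hψinv_mono i <|
          ((hα_mono i).monotone (le_ciSup_of_finite
            (fun j => ‖H i j (x i) - Hh i j (xh i)‖₊) i)).trans (hS1 i _ _)
      _ ≤ _ := le_ciSup_of_finite (fun i => ψinv i (S i (x i) (xh i))) i
  · choose u hu using fun i => hS2 i (x i) (xh i) (uh i)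
    refine ⟨u, fun x' hx' => ?_⟩
    choose xh' hxh' hle using fun i =>
      hu i (fun j => H j.1 i (x j.1)) (fun j => Hh j.1 i (xh j.1)) (x' i) (hx' i)
    refine ⟨xh', hxh', ciSup_le fun i => (hψinv_mono i (hle i)).trans ?_⟩
    have hgain j : σt * ψinv j (S j (x j) (xh j)) ≤ σt * ⨆ i, ψinv i (S i (x i) (xh i)) :=
      mul_le_mul_right (le_ciSup_of_finite (fun i => ψinv i (S i (x i) (xh i))) j) σt
    simp only [(hψinv_mono i).map_max]
    refine max_le_max (max_le ?_ ?_) (max_le_max ?_ ?_)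
    · have h := hsg i i (ψinv i (S i (x i) (xh i)))
      rw [if_pos rfl, hψinv_right i] at h
      exact h.trans (hgain i)
    · rcases pi_nnnorm_eq_zero_or_exists ((fun j : {j : Fin N // j ≠ i} => H j.1 i (x j.1)) -
        fun j : {j : Fin N // j ≠ i} => Hh j.1 i (xh j.1)) with h0 | ⟨⟨j, hj⟩, hnorm⟩
      · rw [h0, hρω_zero, hψinv_zero]
        exact zero_le
      · rw [hnorm]
        have hout : ‖H j i (x j) - Hh j i (xh j)‖₊ ≤ αinv j (S j (x j) (xh j)) := by
          refine (le_ciSup_of_finite (fun k => ‖H j k (x j) - Hh j k (xh j)‖₊) i).trans ?_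
          rw [← hαinv_left j (⨆ k, ‖H j k (x j) - Hh j k (xh j)‖₊)]
          exact hαinv_mono j (hS1 j _ _)
        have h := hsg i j (ψinv j (S j (x j) (xh j)))
        rw [if_neg hj.symm, hψinv_right j] at h
        exact (hψinv_mono i (hρω_mono i hout)).trans (h.trans (hgain j))
    · exact le_ciSup_of_finite (fun i => ψinv i (ρu i ‖uh i‖₊)) i
    · exact le_ciSup_of_finite (fun i => ψinv i (ε i)) i
end

section
/- Let κ_c > 0, τ > 0, κ_d ≥ 1, ε ∈ (0,1) be real numbers, z̲, z̄ natural numbers with 1 ≤ z̲ ≤ z̄, and let V, V⁺, μ ≥ 0 be reals. (Flow step) If c is a natural number with 0 ≤ c ≤ z̄ − 1 and V⁺ ≤ e^{−κ_c τ}·V + μ, then V⁺·e^{κ_c τ ε (c+1)} ≤ e^{−κ_c τ (1−ε)}·( V·e^{κ_c τ ε c} ) + e^{κ_c τ ε (z̄+1)}·μ, and e^{−κ_c τ (1−ε)} < 1. (Jump step) If c is a natural number with z̲ ≤ c ≤ z̄ and V⁺ ≤ κ_d·V + μ, then V⁺ ≤ ( κ_d·e^{−κ_c τ ε z̲} )·(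 V·e^{κ_c τ ε c} ) + μ. -/
/-- Sum-form contraction of the counter-weighted function
`𝒱 = V·e^{κ_c τ ε c}` in the case `κ_d ≥ 1`, `κ_c > 0` of Theorem 2:
flow step (counter `0 ≤ c ≤ z̄-1`) and jump step (counter `z̲ ≤ c ≤ z̄`). -/
theorem stmt15 (κc τ κd ε : ℝ) (zl zb : ℕ)
    (hκc : 0 < κc) (hτ : 0 < τ) (hκd : 1 ≤ κd) (hε : 0 < ε ∧ ε < 1)
    (hzl : 1 ≤ zl) (hzlzb : zl ≤ zb)
    (V Vp μ : ℝ) (hV : 0 ≤ V) (hVp : 0 ≤ Vp) (hμ : 0 ≤ μ) :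
    -- Flow step
    ((∀ c : ℕ, c ≤ zb - 1 → Vp ≤ Real.exp (-(κc * τ)) * V + μ →
        Vp * Real.exp (κc * τ * ε * ((c : ℝ) + 1))
          ≤ Real.exp (-(κc * τ * (1 - ε))) * (V * Real.exp (κc * τ * ε * c))
            + Real.exp (κc * τ * ε * ((zb : ℝ) + 1)) * μ)
      ∧ Real.exp (-(κc * τ * (1 - ε))) < 1)
    ∧
    -- Jump step
    (∀ c : ℕ, zl ≤ c → c ≤ zb → Vp ≤ κd * V + μ →
        Vp ≤ (κd * Real.exp (-(κc * τ * ε * zl))) * (V * Real.exp (κc * τ * ε * c)) + μ) := by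
  obtain ⟨hε0, hε1⟩ := hε
  have hrate : 0 < κc * τ * ε := by positivity
  refine ⟨⟨fun c hc h => ?_, ?_⟩, fun c hzlc _ h => ?_⟩
  · have hczb : (c : ℝ) ≤ zb := by exact_mod_cast hc.trans (Nat.sub_le zb 1)
    have hexp : Real.exp (-(κc * τ)) * Real.exp (κc * τ * ε * ((c : ℝ) + 1))
        = Real.exp (-(κc * τ * (1 - ε))) * Real.exp (κc * τ * ε * c) := by
      rw [← Real.exp_add, ← Real.exp_add]
      ring_nf
    calc Vp * Real.exp (κc * τ * ε * ((c : ℝ) + 1))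
        ≤ (Real.exp (-(κc * τ)) * V + μ) * Real.exp (κc * τ * ε * ((c : ℝ) + 1)) := by
          gcongr
      _ = Real.exp (-(κc * τ * (1 - ε))) * (V * Real.exp (κc * τ * ε * c))
            + Real.exp (κc * τ * ε * ((c : ℝ) + 1)) * μ := by
          linear_combination V * hexp
      _ ≤ _ := by gcongr
  · rw [Real.exp_lt_one_iff, neg_lt_zero]
    exact mul_pos (mul_pos hκc hτ) (sub_pos.mpr hε1)
  · have hzlc' : (zl : ℝ) ≤ c := by exact_mod_cast hzlc
    have hexp : 1 ≤ Real.exp (-(κc * τ * ε * zl)) * Real.exp (κc * τ * ε * c) := by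
      rw [← Real.exp_add, Real.one_le_exp_iff]
      linarith [mul_le_mul_of_nonneg_left hzlc' hrate.le]
    have hκdV : 0 ≤ κd * V := mul_nonneg (zero_le_one.trans hκd) hV
    linarith [le_mul_of_one_le_right hκdV hexp]
end

section
/- Let κ_c ≤ 0, τ > 0, 0 < κ_d < 1 be real numbers, z̄ ≥ 1 a natural number, δ > z̄ a real number, and let V, V⁺, μ ≥ 0 be reals. (Flow step) If c is a natural number with 0 ≤ c ≤ z̄ − 1 and V⁺ ≤ e^{−κ_c τ}·V + μ, then V⁺·κ_d^{(c+1)/δ} ≤ ( e^{−κ_c τ}·κ_d^{1/δ} )·( V·κ_d^{c/δ} ) + μ. (Jump step) If c is a natural number with 0 ≤ c ≤ z̄ and V⁺ ≤ κ_d·V + μ, then V⁺ ≤ κ_d^{(δ−z̄)/δ}·( V·κ_d^{c/δ} ) + μ, and κ_d^{(δ−z̄)/δ} < 1. -/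
/-- Sum-form contraction of the counter-weighted function `𝒱 = V·κ_d^{c/δ}` in the
case `κ_d < 1`, `κ_c ≤ 0` of Theorem 2: flow step (counter `0 ≤ c ≤ z̄-1`) and jump
step (counter `0 ≤ c ≤ z̄`), with contraction factor `κ_d^{(δ-z̄)/δ} < 1` at jumps. -/
theorem stmt16 (κc τ κd : ℝ) (zb : ℕ) (δ : ℝ)
    (hκc : κc ≤ 0) (hτ : 0 < τ) (hκd : 0 < κd ∧ κd < 1)
    (hzb : 1 ≤ zb) (hδ : (zb : ℝ) < δ)
    (V Vp μ : ℝ) (hV : 0 ≤ V) (hVp : 0 ≤ Vp) (hμ : 0 ≤ μ) :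
    -- Flow step
    (∀ c : ℕ, c ≤ zb - 1 → Vp ≤ Real.exp (-(κc * τ)) * V + μ →
        Vp * κd ^ (((c : ℝ) + 1) / δ)
          ≤ (Real.exp (-(κc * τ)) * κd ^ (1 / δ)) * (V * κd ^ ((c : ℝ) / δ)) + μ)
    ∧
    -- Jump step
    ((∀ c : ℕ, c ≤ zb → Vp ≤ κd * V + μ →
        Vp ≤ κd ^ ((δ - (zb : ℝ)) / δ) * (V * κd ^ ((c : ℝ) / δ)) + μ)
      ∧ κd ^ ((δ - (zb : ℝ)) / δ) < 1) := by
  obtain ⟨hκ0, hκ1⟩ := hκd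
  have hδ0 : 0 < δ := (Nat.cast_nonneg zb).trans_lt hδ
  refine ⟨fun c _ h => ?_, fun c hc h => ?_, ?_⟩
  · have hsplit : κd ^ (((c : ℝ) + 1) / δ) = κd ^ ((c : ℝ) / δ) * κd ^ (1 / δ) := by
      rw [add_div, Real.rpow_add hκ0]
    have hle : κd ^ (((c : ℝ) + 1) / δ) ≤ 1 :=
      Real.rpow_le_one hκ0.le hκ1.le (by positivity)
    calc Vp * κd ^ (((c : ℝ) + 1) / δ)
        ≤ (Real.exp (-(κc * τ)) * V + μ) * κd ^ (((c : ℝ) + 1) / δ) := by gcongr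
      _ = Real.exp (-(κc * τ)) * V * κd ^ (((c : ℝ) + 1) / δ)
            + μ * κd ^ (((c : ℝ) + 1) / δ) := add_mul _ _ _
      _ ≤ Real.exp (-(κc * τ)) * V * κd ^ (((c : ℝ) + 1) / δ) + μ := by
          gcongr
          exact mul_le_of_le_one_right hμ hle
      _ = _ := by rw [hsplit]; ring
  · have hc' : (c : ℝ) ≤ zb := Nat.cast_le.mpr hc
    have hle : κd ≤ κd ^ ((δ - (zb : ℝ)) / δ) * κd ^ ((c : ℝ) / δ) := by
      rw [← Real.rpow_add hκ0, ← add_div]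
      refine Real.self_le_rpow_of_le_one hκ0.le hκ1.le ?_
      rw [div_le_one hδ0]
      linarith
    calc Vp ≤ κd * V + μ := h
      _ ≤ κd ^ ((δ - (zb : ℝ)) / δ) * κd ^ ((c : ℝ) / δ) * V + μ := by gcongr
      _ = _ := by ring
  · exact Real.rpow_lt_one hκ0.le hκ1 (div_pos (sub_pos.mpr hδ) hδ0)
end
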